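/- Let U be a random vector uniformly distributed on the closed unit ball S_n = {u ∈ ℝⁿ : ‖u‖ ≤ 1}. Then there exists a constant K₁ (depending only on n) such that for any two nonzero vectors b, b̃ ∈ ℝⁿ, the probability P(⟨b, U⟩ ≥ 0 > ⟨b̃, U⟩) ≤ K₁ · ‖b − b̃‖ / min(‖b‖, ‖b̃‖). -/

import Mathlib

/-!
If `0 ≤ ⟪b, u⟫` and `⟪b̃, u⟫ < 0` with `‖u‖ ≤ 1`, then
`⟪b, u⟫ ≤ ⟪b - b̃, u⟫ ≤ ‖b - b̃‖`, so `u` lies in the slab `0 ≤ ⟪b / ‖b‖, u⟫ ≤ ‖b - b̃‖ / ‖b‖`.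
In an orthonormal basis containing the unit vector `e = b / ‖b‖`, the part of the slab
`0 ≤ ⟪e, u⟫ ≤ t` inside the unit ball is contained in a box with one side of length `t` and
`n - 1` sides of length `2`, so its volume is at most `t * 2 ^ (n - 1)`
(`volume_slab_inter_closedBall_le`). Dividing by the volume of the ball gives the bound.
-/

open MeasureTheory Metric
open scoped RealInnerProductSpace

/-- The uniform probability distribution on the closed unit ball of `ℝⁿ`
(normalized Lebesgue measure on `{u : ‖u‖ ≤ 1}`). -/
noncomputable def uniformBall (n : ℕ) : Measure (EuclideanSpace ℝ (Fin n)) :=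
  (volume (closedBall (0 : EuclideanSpace ℝ (Fin n)) 1))⁻¹ •
    (volume.restrict (closedBall (0 : EuclideanSpace ℝ (Fin n)) 1))

theorem volume_slab_inter_closedBall_le {n : ℕ} (i₀ : Fin n) (e : EuclideanSpace ℝ (Fin n))
    (he : ‖e‖ = 1) (t : ℝ) :
    volume {u : EuclideanSpace ℝ (Fin n) | ‖u‖ ≤ 1 ∧ 0 ≤ ⟪e, u⟫ ∧ ⟪e, u⟫ ≤ t} ≤
      ENNReal.ofReal t * 2 ^ (n - 1) := by
  classical
  obtain ⟨B, hB⟩ := Orthonormal.exists_orthonormalBasis_extension_of_card_eq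
    (𝕜 := ℝ) (E := EuclideanSpace ℝ (Fin n)) (ι := Fin n) (by simp)
    (v := fun _ => e) (s := {i₀}) (by
      refine ⟨fun i => by simpa using he, fun i j hij => ?_⟩
      exact absurd (Subsingleton.elim i j) hij)
  have hB₀ : B i₀ = e := hB i₀ rfl
  let S : Fin n → Set ℝ := Function.update (fun _ => Set.Icc (-1) 1) i₀ (Set.Icc 0 t)
  have hS : ∀ i, MeasurableSet (S i) := fun i => by
    by_cases h : i = i₀
    · subst h; simp [S]
    · simp [S, h]
  have hmp : MeasurePreserving (fun u => WithLp.ofLp (B.repr u)) volume volume :=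
    (PiLp.volume_preserving_ofLp (Fin n)).comp B.measurePreserving_repr
  calc volume {u : EuclideanSpace ℝ (Fin n) | ‖u‖ ≤ 1 ∧ 0 ≤ ⟪e, u⟫ ∧ ⟪e, u⟫ ≤ t}
      ≤ volume ((fun u => WithLp.ofLp (B.repr u)) ⁻¹' Set.univ.pi S) := by
        refine measure_mono ?_
        rintro u ⟨hu, h0, ht⟩ i -
        by_cases h : i = i₀
        · subst h
          simpa [S, B.repr_apply_apply, hB₀] using And.intro h0 ht
        · have h1 : |⟪B i, u⟫| ≤ 1 :=
            (abs_real_inner_le_norm _ _).trans (by simpa using hu)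
          simpa [S, h, B.repr_apply_apply] using abs_le.1 h1
    _ = volume (Set.univ.pi S) :=
        hmp.measure_preimage (MeasurableSet.univ_pi hS).nullMeasurableSet
    _ = ∏ i, volume (S i) := volume_pi_pi S
    _ = volume (S i₀) * ∏ i ∈ Finset.univ.erase i₀, volume (S i) :=
        (Finset.mul_prod_erase _ _ (Finset.mem_univ _)).symm
    _ = ENNReal.ofReal t * 2 ^ (n - 1) := by
        congr 1
        · simp [S]
        · rw [Finset.prod_congr rfl (g := fun _ => (2 : ENNReal))]
          · simp
          · intro i hi
            have h : i ≠ i₀ := Finset.ne_of_mem_erase hi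
            simp only [S, Function.update_of_ne h, Real.volume_Icc]
            norm_num

/-- **Half-space discrepancy bound for the uniform distribution on the ball.**
If `U` is uniformly distributed on the closed unit ball of `ℝⁿ`, there is a
constant `K₁` (depending only on `n`) such that for all nonzero `b, b̃`,
`P(⟨b, U⟩ ≥ 0 > ⟨b̃, U⟩) ≤ K₁ · ‖b − b̃‖ / min (‖b‖) (‖b̃‖)`. -/
theorem stmt_0 (n : ℕ) :
    ∃ K₁ : ℝ,
      ∀ {Ω : Type} [MeasureSpace Ω] [IsProbabilityMeasure (volume : Measure Ω)]
        (U : Ω → EuclideanSpace ℝ (Fin n)), Measurable U →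
        Measure.map U (volume : Measure Ω) = uniformBall n →
        ∀ b btil : EuclideanSpace ℝ (Fin n), b ≠ 0 → btil ≠ 0 →
          ((volume : Measure Ω) {ω | 0 ≤ ⟪b, U ω⟫ ∧ ⟪btil, U ω⟫ < 0}).toReal ≤
            K₁ * ‖b - btil‖ / min ‖b‖ ‖btil‖ := by
  refine ⟨((volume (closedBall (0 : EuclideanSpace ℝ (Fin n)) 1))⁻¹).toReal * 2 ^ (n - 1), ?_⟩
  intro Ω _ _ U hU hmap b btil hb hbtil
  have hn : 0 < n := by
    rcases Nat.eq_zero_or_pos n with rfl | h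
    · exact absurd (Subsingleton.elim b 0) hb
    · exact h
  have hb' : 0 < ‖b‖ := norm_pos_iff.2 hb
  have hbt' : 0 < ‖btil‖ := norm_pos_iff.2 hbtil
  set V := volume (closedBall (0 : EuclideanSpace ℝ (Fin n)) 1) with hV
  have hV0 : V ≠ 0 := (measure_closedBall_pos volume _ one_pos).ne'
  set t : ℝ := ‖b - btil‖ / ‖b‖ with ht
  have ht0 : 0 ≤ t := by positivity
  set A : Set (EuclideanSpace ℝ (Fin n)) := {u | 0 ≤ ⟪b, u⟫ ∧ ⟪btil, u⟫ < 0} with hA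
  have hAm : MeasurableSet A := by
    have h1 : MeasurableSet {u : EuclideanSpace ℝ (Fin n) | 0 ≤ ⟪b, u⟫} :=
      measurableSet_le measurable_const (by fun_prop)
    have h2 : MeasurableSet {u : EuclideanSpace ℝ (Fin n) | ⟪btil, u⟫ < 0} :=
      measurableSet_lt (by fun_prop) measurable_const
    exact h1.inter h2
  have hsub : A ∩ closedBall 0 1 ⊆
      {u | ‖u‖ ≤ 1 ∧ 0 ≤ ⟪‖b‖⁻¹ • b, u⟫ ∧ ⟪‖b‖⁻¹ • b, u⟫ ≤ t} := by
    rintro u ⟨⟨h0, h1⟩, hu⟩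
    have hu' : ‖u‖ ≤ 1 := by simpa using hu
    have h2 : ⟪b - btil, u⟫ ≤ ‖b - btil‖ :=
      (real_inner_le_norm _ _).trans (mul_le_of_le_one_right (norm_nonneg _) hu')
    rw [inner_sub_left] at h2
    refine ⟨hu', ?_, ?_⟩
    · rw [real_inner_smul_left]; positivity
    · rw [real_inner_smul_left, ht, inv_mul_eq_div]
      gcongr
      linarith
  have hle : (volume : Measure Ω) {ω | 0 ≤ ⟪b, U ω⟫ ∧ ⟪btil, U ω⟫ < 0} ≤
      V⁻¹ * (ENNReal.ofReal t * 2 ^ (n - 1)) := by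
    change volume (U ⁻¹' A) ≤ _
    rw [← Measure.map_apply hU hAm, hmap, uniformBall, Measure.smul_apply,
      Measure.restrict_apply hAm, smul_eq_mul]
    gcongr
    exact (measure_mono hsub).trans (volume_slab_inter_closedBall_le ⟨0, hn⟩ _
      (by rw [norm_smul, norm_inv, norm_norm, inv_mul_cancel₀ hb'.ne']) t)
  have hfin : V⁻¹ * (ENNReal.ofReal t * 2 ^ (n - 1)) ≠ ⊤ :=
    ENNReal.mul_ne_top (ENNReal.inv_ne_top.2 hV0)
      (ENNReal.mul_ne_top ENNReal.ofReal_ne_top (by simp))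
  calc _ ≤ (V⁻¹ * (ENNReal.ofReal t * 2 ^ (n - 1))).toReal := ENNReal.toReal_mono hfin hle
    _ = (V⁻¹).toReal * 2 ^ (n - 1) * ‖b - btil‖ / ‖b‖ := by
        rw [ENNReal.toReal_mul, ENNReal.toReal_mul, ENNReal.toReal_ofReal ht0,
          ENNReal.toReal_pow, ENNReal.toReal_ofNat, ht]
        ring
    _ ≤ _ := by
        have := lt_min hb' hbt'
        gcongr
        exact min_le_left _ _
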